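/- For every n ≥ 4, a generic complex plane curve of degree n has no projective automorphisms other than the identity: the set of nonzero homogeneous polynomials Φ ∈ ℂ[x,y,z] of degree n which define a smooth plane curve and for which the identity is the only g ∈ PGL₃(ℂ) such that Φ ∘ ĝ is a nonzero scalar multiple of Φ (ĝ a linear lift of g), contains a subset that is open and dense in the space of all homogeneous polynomials of degree n in three variables, topologized by coefficients. -/

import Mathlib

open MvPolynomial
open scoped MatrixGroups

noncomputable section

/-- Substitution of a linear change of variables into a polynomial in three variables:
`Φ ↦ Φ ∘ M`. -/
def substMat (M : Matrix (Fin 3) (Fin 3) ℂ) :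
    MvPolynomial (Fin 3) ℂ →ₐ[ℂ] MvPolynomial (Fin 3) ℂ :=
  aeval fun i => ∑ j, C (M i j) * X j

/-- The projective linear group `PGL₃(ℂ)`. -/
abbrev PGL3 := GL (Fin 3) ℂ ⧸ Subgroup.center (GL (Fin 3) ℂ)

/-- `Φ` defines a smooth plane curve: the only common zero of the three partial
derivatives in `ℂ³` is the origin. -/
def SmoothCurve (Φ : MvPolynomial (Fin 3) ℂ) : Prop :=
  ∀ q : Fin 3 → ℂ, (∀ i, eval q (pderiv i Φ) = 0) → q = 0

/-- `g ∈ PGL₃(ℂ)` stabilizes the curve `Φ = 0`: for a (hence any) linear lift `glift ∈ GL₃(ℂ)`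
of `g`, the polynomial `Φ ∘ glift` is a nonzero scalar multiple of `Φ`. -/
def ProjStab (Φ : MvPolynomial (Fin 3) ℂ) (g : PGL3) : Prop :=
  ∃ glift : GL (Fin 3) ℂ, QuotientGroup.mk glift = g ∧ ∃ c : ℂ, c ≠ 0 ∧ substMat (↑glift) Φ = c • Φ

/-- The standard topology on polynomials, by coefficients.  On the (finite-dimensional)
space of homogeneous polynomials of a fixed degree this is the standard topology. -/
instance : TopologicalSpace (MvPolynomial (Fin 3) ℂ) :=
  TopologicalSpace.induced (fun Φ d => MvPolynomial.coeff d Φ) inferInstance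


lemma eval_substMat (M : Matrix (Fin 3) (Fin 3) ℂ) (Φ : MvPolynomial (Fin 3) ℂ) (x : Fin 3 → ℂ) :
    eval x (substMat M Φ) = eval (M.mulVec x) Φ := by
  induction Φ using MvPolynomial.induction_on with
  | C a => simp [substMat]
  | add p q hp hq => simp [hp, hq]
  | mul_X p i hp =>
    rw [map_mul, map_mul, hp]
    simp [substMat, Matrix.mulVec, dotProduct]

lemma substMat_substMat (M N : Matrix (Fin 3) (Fin 3) ℂ) (Φ : MvPolynomial (Fin 3) ℂ) :
    substMat M (substMat N Φ) = substMat (N * M) Φ := by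
  apply MvPolynomial.funext
  intro x
  simp [eval_substMat, Matrix.mulVec_mulVec]

lemma substMat_one (Φ : MvPolynomial (Fin 3) ℂ) : substMat 1 Φ = Φ := by
  apply MvPolynomial.funext
  intro x
  simp [eval_substMat]

lemma substMat_hom {n : ℕ} (M : Matrix (Fin 3) (Fin 3) ℂ) {Φ : MvPolynomial (Fin 3) ℂ}
    (h : Φ.IsHomogeneous n) : (substMat M Φ).IsHomogeneous n := by
  have := h.aeval (n := 1) (fun i => ∑ j, C (M i j) * X j) (fun i => by
    apply IsHomogeneous.sum
    intro j _
    exact isHomogeneous_C_mul_X _ _)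
  rw [one_mul] at this
  exact this

lemma eval_smul_hom {n : ℕ} {Φ : MvPolynomial (Fin 3) ℂ}
    (h : Φ.IsHomogeneous n) (a : ℂ) (x : Fin 3 → ℂ) : eval (a • x) Φ = a ^ n * eval x Φ := by
  rw [eval_eq', eval_eq', Finset.mul_sum]
  apply Finset.sum_congr rfl
  intro d hd
  have : d.degree = n := h.degree_eq_sum_deg_support hd |>.symm
  rw [Finsupp.degree_eq_sum] at this
  simp only [Pi.smul_apply, smul_eq_mul, mul_pow, Finset.prod_mul_distrib]
  rw [Finset.prod_pow_eq_pow_sum, this]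
  ring

lemma substMat_smul_hom {n : ℕ} {Φ : MvPolynomial (Fin 3) ℂ}
    (h : Φ.IsHomogeneous n) (a : ℂ) (M : Matrix (Fin 3) (Fin 3) ℂ) :
    substMat (a • M) Φ = a ^ n • substMat M Φ := by
  apply MvPolynomial.funext
  intro x
  simp [eval_substMat, Matrix.smul_mulVec, eval_smul_hom h]

lemma pderiv_substMat (M : Matrix (Fin 3) (Fin 3) ℂ) (Φ : MvPolynomial (Fin 3) ℂ) (j : Fin 3) :
    pderiv j (substMat M Φ) = ∑ k, C (M k j) * substMat M (pderiv k Φ) := by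
  induction Φ using MvPolynomial.induction_on with
  | C a => simp [substMat]
  | add p q hp hq => simp [hp, hq, mul_add, Finset.sum_add_distrib]
  | mul_X p i hp =>
    rw [map_mul, pderiv_mul, hp]
    simp only [pderiv_mul, map_add, map_mul, mul_add, Finset.sum_add_distrib]
    congr 1
    · rw [Finset.sum_mul]
      exact Finset.sum_congr rfl fun k _ => by ring
    · have h1 : pderiv j (substMat M (X i)) = C (M i j) := by
        simp only [substMat, aeval_X, map_sum, pderiv_C_mul, pderiv_X]
        rw [Finset.sum_eq_single j] <;> simp +contextual [Pi.single_apply]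
      rw [h1, Finset.sum_eq_single i]
      · simp; ring
      · intro b _ hb
        simp [pderiv_X, Pi.single_apply, hb.symm]
      · simp

/-- gradient -/
def grad (Φ : MvPolynomial (Fin 3) ℂ) (x : Fin 3 → ℂ) : Fin 3 → ℂ := fun i => eval x (pderiv i Φ)

lemma grad_substMat (M : Matrix (Fin 3) (Fin 3) ℂ) (Φ : MvPolynomial (Fin 3) ℂ) (x : Fin 3 → ℂ) :
    grad (substMat M Φ) x = M.transpose.mulVec (grad Φ (M.mulVec x)) := by
  funext j
  simp [grad, pderiv_substMat, eval_substMat, Matrix.mulVec, dotProduct]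

lemma grad_smul (c : ℂ) (Φ : MvPolynomial (Fin 3) ℂ) (x : Fin 3 → ℂ) :
    grad (c • Φ) x = c • grad Φ x := by
  funext j
  simp [grad]

lemma grad_smul_hom {n : ℕ} {Φ : MvPolynomial (Fin 3) ℂ}
    (h : Φ.IsHomogeneous n) (a : ℂ) (x : Fin 3 → ℂ) :
    grad Φ (a • x) = a ^ (n - 1) • grad Φ x := by
  funext j
  simp [grad, eval_smul_hom h.pderiv]

lemma coeff_of_grad {n : ℕ} (hn : 4 ≤ n) {Φ : MvPolynomial (Fin 3) ℂ}
    (h : Φ.IsHomogeneous n) (i j : Fin 3) (h0 : grad Φ (Pi.single i 1) j = 0) :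
    coeff (Finsupp.single i (n - 1) + Finsupp.single j 1) Φ = 0 := by
  have h1 : coeff (Finsupp.single i (n - 1)) (pderiv j Φ) = 0 := by
    rw [← h0, grad, eval_eq']
    rw [Finset.sum_eq_single (Finsupp.single i (n-1))]
    · rw [Finset.prod_eq_one]
      · simp
      · intro k _
        by_cases hk : k = i
        · subst hk; simp
        · rw [Finsupp.single_apply, if_neg (Ne.symm hk)]; simp
    · intro d hd hne
      have hdeg : d.degree = n - 1 := (h.pderiv.degree_eq_sum_deg_support hd).symm
      have : ∃ k, k ≠ i ∧ d k ≠ 0 := by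
        by_contra hcon
        push Not at hcon
        apply hne
        have hdi : d = Finsupp.single i (d i) := by
          ext k
          by_cases hk : k = i
          · subst hk; simp
          · rw [hcon k hk, Finsupp.single_apply, if_neg (Ne.symm hk)]
        rw [hdi, Finsupp.degree_single] at hdeg
        rw [hdi, hdeg]
      obtain ⟨k, hk, hdk⟩ := this
      rw [Finset.prod_eq_zero (Finset.mem_univ k), mul_zero]
      simp [hk, hdk]
    · intro hns
      rw [notMem_support_iff.mp hns, zero_mul]
  rw [coeff_pderiv] at h1
  have : ((Finsupp.single i (n-1) : Fin 3 →₀ ℕ) j : ℂ) + 1 ≠ 0 := by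
    exact_mod_cast Nat.succ_ne_zero ((Finsupp.single i (n-1) : Fin 3 →₀ ℕ) j)
  exact (mul_eq_zero.mp h1).resolve_right this

lemma coeff_substMat_diagonal (D : Fin 3 → ℂ) (Φ : MvPolynomial (Fin 3) ℂ) (d : Fin 3 →₀ ℕ) :
    coeff d (substMat (Matrix.diagonal D) Φ) = (∏ i, D i ^ d i) * coeff d Φ := by
  induction Φ using MvPolynomial.induction_on' with
  | add p q hp hq => simp [hp, hq, mul_add]
  | monomial e a =>
    have : substMat (Matrix.diagonal D) (monomial e a) = monomial e ((∏ i, D i ^ e i) * a) := by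
      apply MvPolynomial.funext
      intro x
      rw [eval_substMat]
      simp [eval_monomial, Matrix.mulVec_diagonal, mul_pow, Finset.prod_mul_distrib,
        Finsupp.prod_fintype]
      ring
    rw [this, coeff_monomial, coeff_monomial]
    split_ifs with h
    · rw [h]
    · simp


/-- exponents of degree n -/
def Dn (n : ℕ) : Finset (Fin 3 →₀ ℕ) := Finset.univ.finsuppAntidiag n

lemma mem_Dn {n : ℕ} {d : Fin 3 →₀ ℕ} : d ∈ Dn n ↔ d.degree = n := by
  simp [Dn, Finset.mem_finsuppAntidiag, Finsupp.degree_eq_sum]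

/-- polynomial with given coefficients -/
def pol (n : ℕ) (c : Dn n → ℂ) : MvPolynomial (Fin 3) ℂ := ∑ d : Dn n, monomial d.1 (c d)

lemma coeff_pol (n : ℕ) (c : Dn n → ℂ) (d : Dn n) : coeff d.1 (pol n c) = c d := by
  rw [pol, coeff_sum, Finset.sum_eq_single d]
  · simp
  · intro b _ hb
    rw [coeff_monomial, if_neg]
    exact fun h => hb (Subtype.ext h)
  · simp

lemma pol_hom (n : ℕ) (c : Dn n → ℂ) : (pol n c).IsHomogeneous n := by
  apply IsHomogeneous.sum
  intro d _
  exact isHomogeneous_monomial _ (mem_Dn.mp d.2)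

lemma pol_coeff {n : ℕ} {Φ : MvPolynomial (Fin 3) ℂ} (h : Φ.IsHomogeneous n) :
    pol n (fun d => coeff d.1 Φ) = Φ := by
  ext d
  by_cases hd : d ∈ Dn n
  · exact coeff_pol n _ ⟨d, hd⟩
  · rw [mem_Dn] at hd
    rw [h.coeff_eq_zero hd, (pol_hom n _).coeff_eq_zero hd]

/-- the thin condition -/
def Bad (n : ℕ) (Φ : MvPolynomial (Fin 3) ℂ) : Prop :=
  ∃ (S : Finset (Dn n)) (T : Finset (Fin 3 × Fin 3)), S.card + T.card < (Dn n).card ∧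
    ∃ P : Matrix (Fin 3) (Fin 3) ℂ, P.det ≠ 0 ∧
      (∀ i j, (i, j) ∉ T → P i j = (1 : Matrix (Fin 3) (Fin 3) ℂ) i j) ∧
      ∀ d : Dn n, d ∉ S → coeff d.1 (substMat P Φ) = 0

/-- coefficientwise smooth -/
def CS {V : Type*} [NormedAddCommGroup V] [NormedSpace ℝ V]
    (F : V → MvPolynomial (Fin 3) ℂ) : Prop := ∀ d, ContDiff ℝ 1 (fun v => coeff d (F v))

section
variable {V : Type*} [NormedAddCommGroup V] [NormedSpace ℝ V]

lemma CS.const (p : MvPolynomial (Fin 3) ℂ) : CS (fun _ : V => p) := fun _ => contDiff_const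

lemma CS.sum {α : Type*} (s : Finset α) {F : α → V → MvPolynomial (Fin 3) ℂ}
    (h : ∀ a ∈ s, CS (F a)) : CS (fun v => ∑ a ∈ s, F a v) := by
  intro d
  simp only [coeff_sum]
  exact ContDiff.sum fun a ha => h a ha d

lemma CS.mul {F G : V → MvPolynomial (Fin 3) ℂ} (hF : CS F) (hG : CS G) :
    CS (fun v => F v * G v) := by
  intro d
  simp only [coeff_mul]
  exact ContDiff.sum fun a _ => (hF _).mul (hG _)

lemma CS.pow {F : V → MvPolynomial (Fin 3) ℂ} (hF : CS F) (k : ℕ) :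
    CS (fun v => F v ^ k) := by
  induction k with
  | zero => simpa using CS.const 1
  | succ k ih => simpa only [pow_succ] using ih.mul hF

lemma CS.prod {α : Type*} (s : Finset α) {F : α → V → MvPolynomial (Fin 3) ℂ}
    (h : ∀ a ∈ s, CS (F a)) : CS (fun v => ∏ a ∈ s, F a v) := by
  classical
  induction s using Finset.induction_on with
  | empty => simpa using CS.const 1
  | insert a s ha ih =>
    simp only [Finset.prod_insert ha]
    exact (h a (by simp)).mul (ih fun b hb => h b (by simp [hb]))

lemma CS.C {f : V → ℂ} (hf : ContDiff ℝ 1 f) : CS (fun v => (MvPolynomial.C (f v))) := by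
  intro d
  simp only [coeff_C]
  split_ifs
  · exact hf
  · exact contDiff_const

lemma CS.substMat {M : V → Matrix (Fin 3) (Fin 3) ℂ} (hM : ∀ i j, ContDiff ℝ 1 fun v => M v i j)
    {α : Type*} [Fintype α] (e : α → (Fin 3 →₀ ℕ)) {s : V → α → ℂ}
    (hs : ∀ a, ContDiff ℝ 1 fun v => s v a) :
    CS (fun v => _root_.substMat (M v) (∑ a, monomial (e a) (s v a))) := by
  have : (fun v => _root_.substMat (M v) (∑ a, monomial (e a) (s v a))) =
      fun v => ∑ a, MvPolynomial.C (s v a) *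
        ∏ i, (∑ j, MvPolynomial.C (M v i j) * X j) ^ (e a i) := by
    funext v
    rw [map_sum]
    refine Finset.sum_congr rfl fun a _ => ?_
    simp only [_root_.substMat]
    rw [aeval_monomial, Finsupp.prod_fintype _ _ (by simp)]
    rfl
  rw [this]
  refine CS.sum _ fun a _ => (CS.C (hs a)).mul (CS.prod _ fun i _ => CS.pow ?_ _)
  exact CS.sum _ fun j _ => (CS.C (hM i j)).mul (CS.const _)

end

/-- pattern matrix -/
def Pm (T : Finset (Fin 3 × Fin 3)) (t : T → ℂ) : Matrix (Fin 3) (Fin 3) ℂ :=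
  fun i j => if h : (i, j) ∈ T then t ⟨(i, j), h⟩ else (1 : Matrix (Fin 3) (Fin 3) ℂ) i j

/-- parametrization -/
def par (n : ℕ) (S : Finset (Dn n)) (T : Finset (Fin 3 × Fin 3)) (p : (S → ℂ) × (T → ℂ)) :
    Dn n → ℂ := fun d =>
  coeff d.1 (substMat (Pm T p.2).adjugate (∑ a : S, monomial a.1.1 (p.1 a)))

lemma par_contDiff (n : ℕ) (S : Finset (Dn n)) (T : Finset (Fin 3 × Fin 3)) :
    ContDiff ℝ 1 (par n S T) := by
  rw [contDiff_pi]
  intro d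
  refine CS.substMat (V := (S → ℂ) × (T → ℂ)) (M := fun p => (Pm T p.2).adjugate)
    (s := fun p => p.1) ?_ (fun a : S => a.1.1) ?_ d.1
  · have hP : ∀ i j, ContDiff ℝ 1 fun p : (S → ℂ) × (T → ℂ) => Pm T p.2 i j := by
      intro i j
      unfold Pm
      split_ifs with h
      · fun_prop
      · fun_prop
    intro i j
    simp only [Matrix.adjugate_fin_three]
    fin_cases i <;> fin_cases j <;> simp <;> fun_prop
  · intro a
    fun_prop

lemma dense_not_bad (n : ℕ) : Dense {c : Dn n → ℂ | ¬ Bad n (pol n c)} := by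
  have key : {c : Dn n → ℂ | Bad n (pol n c)} ⊆
      ⋃ q : {q : Finset (Dn n) × Finset (Fin 3 × Fin 3) // q.1.card + q.2.card < (Dn n).card},
        Set.range (par n q.1.1 q.1.2) := by
    rintro c ⟨S, T, hc, P, hP, hT, hS⟩
    rw [Set.mem_iUnion]
    refine ⟨⟨(S, T), hc⟩, ?_⟩
    set Ψ := (P.det ^ n)⁻¹ • substMat P (pol n c) with hΨ
    refine ⟨(fun a => coeff a.1.1 Ψ, fun t => P t.1.1 t.1.2), ?_⟩
    have h1 : Pm T (fun t => P t.1.1 t.1.2) = P := by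
      ext i j
      unfold Pm
      split_ifs with h
      · rfl
      · exact (hT i j h).symm
    have hΨh : Ψ.IsHomogeneous n := by
      rw [hΨ, smul_eq_C_mul]
      exact (substMat_hom _ (pol_hom n c)).C_mul _
    have h2 : ∑ a : S, monomial a.1.1 (coeff a.1.1 Ψ) = Ψ := by
      conv_rhs => rw [← pol_coeff hΨh, pol]
      rw [← Finset.sum_subset (Finset.subset_univ S)]
      · rw [← Finset.sum_coe_sort S]
      · intro d _ hd
        simp [hΨ, hS d hd]
    funext d
    simp only [par, h1, h2]
    rw [hΨ, map_smul, substMat_substMat, Matrix.mul_adjugate,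
      substMat_smul_hom (pol_hom n c), substMat_one, smul_smul,
      inv_mul_cancel₀ (pow_ne_zero _ hP), one_smul, coeff_pol]
  have hd : dimH {c : Dn n → ℂ | Bad n (pol n c)} < Module.finrank ℝ (Dn n → ℂ) := by
    refine lt_of_le_of_lt (dimH_mono key) ?_
    rw [dimH_iUnion]
    have hpos : 0 < (Dn n).card := by
      rw [Finset.card_pos]
      exact ⟨Finsupp.single 0 n, by rw [mem_Dn]; simp⟩
    have hfin : Module.finrank ℝ (Dn n → ℂ) = 2 * (Dn n).card := by
      rw [Module.finrank_pi_fintype]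
      simp [mul_comm]
    refine lt_of_le_of_lt (b := ((2 * ((Dn n).card - 1) : ℕ) : ENNReal)) (iSup_le ?_) ?_
    · rintro ⟨⟨S, T⟩, hST⟩
      refine (par_contDiff n S T).dimH_range_le.trans ?_
      have : Module.finrank ℝ ((S → ℂ) × (T → ℂ)) = 2 * (S.card + T.card) := by
        rw [Module.finrank_prod, Module.finrank_pi_fintype, Module.finrank_pi_fintype]
        simp; ring
      rw [this]
      norm_cast
      simp only at hST
      omega
    · rw [hfin]
      norm_cast
      omega
  exact dense_compl_of_dimH_lt_finrank hd


lemma card_aux {n k : ℕ} (S : Finset (Dn n)) (f : Fin k → Dn n) (hf : Function.Injective f)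
    (hS : ∀ a, f a ∉ S) : S.card + k ≤ (Dn n).card := by
  classical
  have h1 : Disjoint S (Finset.univ.image f) := by
    rw [Finset.disjoint_right]
    intro d hd
    obtain ⟨a, _, rfl⟩ := Finset.mem_image.mp hd
    exact hS a
  have h2 := Finset.card_union_of_disjoint h1
  rw [Finset.card_image_of_injective _ hf, Finset.card_univ, Fintype.card_fin] at h2
  rw [← h2]
  calc _ ≤ (Finset.univ : Finset (Dn n)).card := Finset.card_le_card (Finset.subset_univ _)
    _ = _ := by simp

lemma bad_of_sing {n : ℕ} (hn : 4 ≤ n) {Φ : MvPolynomial (Fin 3) ℂ} (h : Φ.IsHomogeneous n)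
    (hs : ¬ SmoothCurve Φ) : Bad n Φ := by
  classical
  unfold SmoothCurve at hs
  push Not at hs
  obtain ⟨q, hq, hq0⟩ := hs
  obtain ⟨i, hi⟩ := Function.ne_iff.mp hq0
  simp only [Pi.zero_apply] at hi
  set q' := (q i)⁻¹ • q with hq'
  have hg : grad Φ q' = 0 := by
    rw [hq', grad_smul_hom h]
    have : grad Φ q = 0 := funext hq
    rw [this, smul_zero]
  have hq'i : q' i = 1 := by simp [hq', hi]
  set P := (1 : Matrix (Fin 3) (Fin 3) ℂ).updateCol i q' with hP
  have hPe : P.mulVec (Pi.single i 1) = q' := by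
    rw [Matrix.mulVec_single_one]
    funext k
    simp [hP]
  let f : Fin 3 → Dn n := fun j =>
    ⟨Finsupp.single i (n - 1) + Finsupp.single j 1, by
      rw [mem_Dn, map_add, Finsupp.degree_single, Finsupp.degree_single]; omega⟩
  have hf : Function.Injective f := by
    intro j k hjk
    have := congrArg Subtype.val hjk
    simp only [f, add_right_inj] at this
    exact Finsupp.single_left_injective one_ne_zero this
  let S : Finset (Dn n) := Finset.univ.filter (fun d => d ∉ Set.range f)
  have hS := card_aux S f hf (by intro a; simp [S])
  let T : Finset (Fin 3 × Fin 3) := Finset.univ.filter (fun p => p.2 = i ∧ p.1 ≠ i)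
  have hT : T.card = 2 := by
    have : ∀ i : Fin 3, (Finset.univ.filter
        (fun p : Fin 3 × Fin 3 => p.2 = i ∧ p.1 ≠ i)).card = 2 := by decide
    exact this i
  refine ⟨S, T, by omega, P, ?_, ?_, ?_⟩
  · rw [hP, ← Matrix.cramer_apply, Matrix.cramer_one]
    simp [hq'i]
  · intro a b hab
    simp only [T, Finset.mem_filter, Finset.mem_univ, true_and, not_and_not_right] at hab
    rw [hP, Matrix.updateCol_apply]
    split_ifs with hb
    · rw [hab hb, hb, hq'i]; simp
    · rfl
  · intro d hd
    simp only [S, Finset.mem_filter, Finset.mem_univ, true_and, not_not] at hd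
    obtain ⟨j, rfl⟩ := hd
    apply coeff_of_grad hn (substMat_hom P h)
    rw [grad_substMat, hPe, hg]
    simp

/-- first of pair -/
def pA : Fin 7 → ℕ × ℕ := ![(0,3), (1,2), (2,1), (0,1), (0,0), (2,0), (4,0)]
/-- second of pair -/
def pB : Fin 7 → ℕ × ℕ := ![(0,4), (1,3), (2,2), (1,1), (1,0), (3,0), (3,1)]

lemma pAB_disj : ∀ k l : Fin 7, k ≠ l → pA k ≠ pA l ∧ pA k ≠ pB l ∧ pB k ≠ pA l ∧ pB k ≠ pB l := by
  decide

lemma bad_of_diag {n m : ℕ} (hn : 4 ≤ n) (hm : m ≤ 7) {Φ : MvPolynomial (Fin 3) ℂ}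
    (P : Matrix (Fin 3) (Fin 3) ℂ) (hP : P.det ≠ 0)
    (T : Finset (Fin 3 × Fin 3)) (hTm : T.card < m)
    (hT : ∀ i j, (i, j) ∉ T → P i j = (1 : Matrix (Fin 3) (Fin 3) ℂ) i j)
    (D : Fin 3 → ℂ) (hD : ∀ i, D i ≠ 0) (c : ℂ)
    (hc : substMat (Matrix.diagonal D) (substMat P Φ) = c • substMat P Φ)
    (σ : Equiv.Perm (Fin 3)) (h01 : D (σ 0) ≠ D (σ 1)) (h02 : D (σ 0) ≠ D (σ 2))
    (h12 : m = 7 → D (σ 1) ≠ D (σ 2)) : Bad n Φ := by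
  classical
  let mon : ℕ × ℕ → (Fin 3 →₀ ℕ) := fun p =>
    Finsupp.single (σ 0) (n - p.1 - p.2) + Finsupp.single (σ 1) p.1 + Finsupp.single (σ 2) p.2
  let inS : ℕ × ℕ → Prop := fun p =>
    D (σ 0) ^ (n - p.1 - p.2) * D (σ 1) ^ p.1 * D (σ 2) ^ p.2 = c
  have hmon : ∀ p, (∏ i, D i ^ mon p i) =
      D (σ 0) ^ (n - p.1 - p.2) * D (σ 1) ^ p.1 * D (σ 2) ^ p.2 := by
    intro p
    rw [← Equiv.prod_comp σ, Fin.prod_univ_three]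
    simp [mon, Finsupp.single_apply]
  have hmon1 : ∀ p, mon p (σ 1) = p.1 := by
    intro p; simp [mon, Finsupp.single_apply]
  have hmon2 : ∀ p, mon p (σ 2) = p.2 := by
    intro p; simp [mon, Finsupp.single_apply]
  let ch : Fin 7 → ℕ × ℕ := fun k => if inS (pA k) then pB k else pA k
  have hchinj : Function.Injective ch := by
    intro k l hkl
    by_contra hne
    obtain ⟨h1, h2, h3, h4⟩ := pAB_disj k l hne
    simp only [ch] at hkl
    split_ifs at hkl <;> contradiction
  have hsumAB : ∀ k : Fin 7, (pA k).1 + (pA k).2 ≤ 4 ∧ (pB k).1 + (pB k).2 ≤ 4 := by decide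
  have hchs : ∀ k, (ch k).1 + (ch k).2 ≤ 4 := by
    intro k
    simp only [ch]
    split_ifs
    · exact (hsumAB k).2
    · exact (hsumAB k).1
  -- adjacency
  have hxy : ∀ a b, a + 1 + b ≤ n → inS (a, b) → inS (a + 1, b) → False := by
    intro a b hab h1 h2
    simp only [inS] at h1 h2
    obtain ⟨r, hr⟩ : ∃ r, n - a - b = r + 1 := ⟨n - a - b - 1, by omega⟩
    have hr' : n - (a + 1) - b = r := by omega
    rw [hr] at h1
    rw [hr', ← h1] at h2
    have h3 : D (σ 0) ^ r * D (σ 1) ^ a * D (σ 2) ^ b * (D (σ 1) - D (σ 0)) = 0 := by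
      linear_combination h2
    have := sub_ne_zero.mpr h01.symm
    simp [hD, this] at h3
  have hxz : ∀ a b, a + 1 + b ≤ n → inS (a, b) → inS (a, b + 1) → False := by
    intro a b hab h1 h2
    simp only [inS] at h1 h2
    obtain ⟨r, hr⟩ : ∃ r, n - a - b = r + 1 := ⟨n - a - b - 1, by omega⟩
    have hr' : n - a - (b + 1) = r := by omega
    rw [hr] at h1
    rw [hr', ← h1] at h2
    have h3 : D (σ 0) ^ r * D (σ 1) ^ a * D (σ 2) ^ b * (D (σ 2) - D (σ 0)) = 0 := by
      linear_combination h2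
    have := sub_ne_zero.mpr h02.symm
    simp [hD, this] at h3
  have hyz : m = 7 → ∀ a b, inS (a + 1, b) → inS (a, b + 1) → False := by
    intro hm7 a b h1 h2
    simp only [inS] at h1 h2
    have hr' : n - a - (b + 1) = n - (a + 1) - b := by omega
    rw [hr', ← h1] at h2
    have h3 : D (σ 0) ^ (n - (a + 1) - b) * D (σ 1) ^ a * D (σ 2) ^ b * (D (σ 2) - D (σ 1)) = 0 := by
      linear_combination h2
    have := sub_ne_zero.mpr (h12 hm7).symm
    simp [hD, this] at h3
  have hpair : ∀ k : Fin 7, k.val < m → inS (pA k) → inS (pB k) → False := by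
    intro k hk
    fin_cases k
    · exact hxz 0 3 (by omega)
    · exact hxz 1 2 (by omega)
    · exact hxz 2 1 (by omega)
    · exact hxy 0 1 (by omega)
    · exact hxy 0 0 (by omega)
    · exact hxy 2 0 (by omega)
    · exact hyz (by simp at hk; omega) 3 0
  have hch : ∀ k : Fin 7, k.val < m → ¬ inS (ch k) := by
    intro k hk
    simp only [ch]
    split_ifs with h
    · exact hpair k hk h
    · exact h
  let f : Fin m → Dn n := fun k => ⟨mon (ch (Fin.castLE hm k)), by
    rw [mem_Dn]
    have := hchs (Fin.castLE hm k)
    simp only [mon, map_add, Finsupp.degree_single]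
    omega⟩
  have hf : Function.Injective f := by
    intro k l hkl
    have := congrArg Subtype.val hkl
    simp only [f] at this
    have h1 := DFunLike.congr_fun this (σ 1)
    have h2 := DFunLike.congr_fun this (σ 2)
    rw [hmon1, hmon1] at h1
    rw [hmon2, hmon2] at h2
    exact Fin.castLE_injective hm (hchinj (Prod.ext h1 h2))
  let S : Finset (Dn n) := Finset.univ.filter (fun d => ∏ i, D i ^ d.1 i = c)
  have hS := card_aux S f hf (by
    intro a
    simp only [S, Finset.mem_filter, Finset.mem_univ, true_and, f, hmon]
    exact hch _ a.2)
  refine ⟨S, T, by omega, P, hP, hT, ?_⟩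
  intro d hd
  simp only [S, Finset.mem_filter, Finset.mem_univ, true_and] at hd
  have h1 := congrArg (coeff d.1) hc
  rw [coeff_substMat_diagonal, coeff_smul, smul_eq_mul] at h1
  have h2 : (∏ i, D i ^ d.1 i - c) * coeff d.1 (substMat P Φ) = 0 := by
    linear_combination h1
  exact (mul_eq_zero.mp h2).resolve_left (sub_ne_zero.mpr hd)

lemma semi_of_conj {Φ : MvPolynomial (Fin 3) ℂ} {g P : Matrix (Fin 3) (Fin 3) ℂ} {D : Fin 3 → ℂ}
    (hgP : g * P = P * Matrix.diagonal D) {c : ℂ} (hc : substMat g Φ = c • Φ) :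
    substMat (Matrix.diagonal D) (substMat P Φ) = c • substMat P Φ := by
  rw [substMat_substMat, ← hgP, ← substMat_substMat, hc, map_smul]

lemma bad_of_inj {n : ℕ} (hn : 4 ≤ n) {Φ : MvPolynomial (Fin 3) ℂ}
    {g P : Matrix (Fin 3) (Fin 3) ℂ} (hP : P.det ≠ 0) {D : Fin 3 → ℂ} (hD : ∀ i, D i ≠ 0)
    (hgP : g * P = P * Matrix.diagonal D) {c : ℂ} (hc : substMat g Φ = c • Φ)
    (hinj : Function.Injective D) : Bad n Φ := by
  classical
  obtain ⟨σ, hσ⟩ : ∃ σ : Equiv.Perm (Fin 3), ∀ i, P (σ i) i ≠ 0 := by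
    by_contra hcon
    push Not at hcon
    apply hP
    rw [Matrix.det_apply]
    apply Finset.sum_eq_zero
    intro σ _
    obtain ⟨i, hi⟩ := hcon σ
    rw [Finset.prod_eq_zero (f := fun i => P (σ i) i) (Finset.mem_univ i) hi, smul_zero]
  have hσ' : ∀ l, P l (σ.symm l) ≠ 0 := fun l => by simpa using hσ (σ.symm l)
  let E : Fin 3 → ℂ := fun l => (P l (σ.symm l))⁻¹
  let P' := P.submatrix id σ.symm * Matrix.diagonal E
  have hP'e : ∀ k l, P' k l = P k (σ.symm l) * (P l (σ.symm l))⁻¹ := by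
    intro k l; simp [P', E]
  refine bad_of_diag (m := 7) hn le_rfl P' ?_ (Finset.univ.filter fun p => p.1 ≠ p.2) (by decide)
    ?_ (D ∘ σ.symm) (fun i => hD _) c (semi_of_conj (g := g) ?_ hc) 1 ?_ ?_ ?_
  · rw [Matrix.det_mul, Matrix.det_permute', Matrix.det_diagonal]
    refine mul_ne_zero (mul_ne_zero ?_ hP) (Finset.prod_ne_zero_iff.mpr fun l _ => inv_ne_zero (hσ' l))
    rcases Int.units_eq_one_or (Equiv.Perm.sign σ.symm) with h | h <;> simp [h]
  · intro i j hij
    simp only [Finset.mem_filter, Finset.mem_univ, true_and, not_not] at hij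
    subst hij
    rw [hP'e, mul_inv_cancel₀ (hσ' i)]; simp
  · ext k l
    have := congrFun (congrFun hgP k) (σ.symm l)
    rw [Matrix.mul_diagonal, Matrix.mul_apply] at this
    rw [Matrix.mul_diagonal, Matrix.mul_apply]
    simp only [hP'e, Function.comp]
    simp only [← mul_assoc]
    rw [← Finset.sum_mul, this]
    ring
  all_goals simp [hinj.eq_iff]

lemma bad_of_hom {n : ℕ} (hn : 4 ≤ n) {Φ : MvPolynomial (Fin 3) ℂ}
    {g P : Matrix (Fin 3) (Fin 3) ℂ} (hP : P.det ≠ 0) {D : Fin 3 → ℂ} (hD : ∀ i, D i ≠ 0)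
    (hgP : g * P = P * Matrix.diagonal D) {c : ℂ} (hc : substMat g Φ = c • Φ)
    (s : Fin 3) (α : ℂ) (hα : α ≠ 0) (hs : D s ≠ α) (hr : ∀ i, i ≠ s → D i = α) : Bad n Φ := by
  classical
  have hU : IsUnit P.det := isUnit_iff_ne_zero.mpr hP
  let l : Fin 3 → ℂ := fun k => P⁻¹ s k
  let v : Fin 3 → ℂ := fun k => P k s
  have hlv : ∑ k, l k * v k = 1 := by
    have := congrFun (congrFun (Matrix.nonsing_inv_mul P hU) s) s
    rw [Matrix.mul_apply] at this
    simpa using this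
  obtain ⟨t, ht⟩ : ∃ t, l t * v t ≠ 0 := by
    by_contra hcon
    push Not at hcon
    simp [hcon] at hlv
  have hlt : l t ≠ 0 := left_ne_zero_of_mul ht
  have hvt : v t ≠ 0 := right_ne_zero_of_mul ht
  have hgv : g.mulVec v = D s • v := by
    funext k
    have := congrFun (congrFun hgP k) s
    rw [Matrix.mul_diagonal, Matrix.mul_apply] at this
    simp only [Matrix.mulVec, dotProduct, Pi.smul_apply, smul_eq_mul, v]
    rw [this]; ring
  have hgx : ∀ x : Fin 3 → ℂ, ∑ k, l k * x k = 0 → g.mulVec x = α • x := by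
    intro x hx
    have hx' : x = P.mulVec (P⁻¹.mulVec x) := by
      rw [Matrix.mulVec_mulVec, Matrix.mul_nonsing_inv P hU, Matrix.one_mulVec]
    have hy : (P⁻¹.mulVec x) s = 0 := hx
    have hDy : (Matrix.diagonal D).mulVec (P⁻¹.mulVec x) = α • (P⁻¹.mulVec x) := by
      funext k
      rw [Matrix.mulVec_diagonal]
      by_cases hk : k = s
      · rw [hk, Pi.smul_apply, hy]; simp
      · rw [hr k hk]; simp
    conv_lhs => rw [hx']
    rw [Matrix.mulVec_mulVec, hgP, ← Matrix.mulVec_mulVec, hDy, Matrix.mulVec_smul, ← hx']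
  let P' : Matrix (Fin 3) (Fin 3) ℂ := fun k j =>
    if j = t then v k / v t else (1 : Matrix (Fin 3) (Fin 3) ℂ) k j - if k = t then l j / l t else 0
  let D' : Fin 3 → ℂ := fun j => if j = t then D s else α
  let T : Finset (Fin 3 × Fin 3) := Finset.univ.filter (fun p => ¬ (p.1 = t ↔ p.2 = t))
  have hT : T.card = 4 := by
    simp only [T]
    clear_value P' D'
    clear ht hlt hvt
    revert t
    decide
  have hcol : ∀ j, g.mulVec (fun k => P' k j) = D' j • (fun k => P' k j) := by
    intro j
    by_cases hj : j = t
    · have : (fun k => P' k j) = (v t)⁻¹ • v := by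
        funext k; simp [P', hj]; field_simp
      rw [this, Matrix.mulVec_smul, hgv, smul_comm]
      simp [D', hj]
    · simp only [D', if_neg hj]
      apply hgx
      have : ∀ k, l k * P' k j = (if k = j then l j else 0) - (if k = t then l j else 0) := by
        intro k
        simp only [P', if_neg hj, Matrix.one_apply]
        split_ifs with h1 h2 h2
        · exact absurd (h1.symm.trans h2) hj
        · rw [h1]; simp
        · rw [h2]; field_simp; ring
        · simp
      simp [this]
  obtain ⟨σ, hσ⟩ : ∃ σ : Equiv.Perm (Fin 3), σ 0 = t := ⟨Equiv.swap 0 t, by simp⟩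
  have hσ1 : σ 1 ≠ t := by rw [← hσ]; simp
  have hσ2 : σ 2 ≠ t := by rw [← hσ]; simp
  refine bad_of_diag (m := 6) hn (by norm_num) P' ?_ T (by omega)
    ?_ D' ?_ c (semi_of_conj (g := g) ?_ hc) σ ?_ ?_ (by norm_num)
  · have : P'.det * (v t * l t) = 1 := by
      rw [← hlv, Matrix.det_fin_three, Fin.sum_univ_three]
      clear_value l v
      clear hσ hσ1 hσ2 hcol hT ht
      simp only [P']
      fin_cases t <;> simp at hlt hvt ⊢ <;> field_simp <;> ring
    exact left_ne_zero_of_mul (this ▸ one_ne_zero)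
  · intro i j hij
    simp only [T, Finset.mem_filter, Finset.mem_univ, true_and, not_not] at hij
    simp only [P']
    by_cases hj : j = t
    · rw [if_pos hj, hij.mpr hj, hj, div_self hvt]; simp
    · rw [if_neg hj, if_neg (fun h => hj (hij.mp h)), sub_zero]
  · intro i
    simp only [D']
    split_ifs
    · exact hD s
    · exact hα
  · ext k j
    rw [Matrix.mul_diagonal, Matrix.mul_apply]
    have := congrFun (hcol j) k
    simp only [Matrix.mulVec, dotProduct, Pi.smul_apply, smul_eq_mul] at this
    rw [this]; ring
  · simp only [D', hσ, if_neg hσ1, if_true]; exact hs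
  · simp only [D', hσ, if_neg hσ2, if_true]; exact hs

lemma bad_of_stab {n : ℕ} (hn : 4 ≤ n) {Φ : MvPolynomial (Fin 3) ℂ}
    {g P : Matrix (Fin 3) (Fin 3) ℂ} (hP : P.det ≠ 0) {D : Fin 3 → ℂ} (hD : ∀ i, D i ≠ 0)
    (hgP : g * P = P * Matrix.diagonal D) {c : ℂ} (hc : substMat g Φ = c • Φ)
    (hnc : ¬ ∃ a, ∀ i, D i = a) : Bad n Φ := by
  by_cases h01 : D 0 = D 1
  · refine bad_of_hom hn hP hD hgP hc 2 (D 0) (hD 0) ?_ ?_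
    · intro h
      exact hnc ⟨D 0, fun i => by fin_cases i <;> simp [h, h01]⟩
    · intro i hi
      fin_cases i <;> simp_all
  by_cases h02 : D 0 = D 2
  · refine bad_of_hom hn hP hD hgP hc 1 (D 0) (hD 0) (Ne.symm h01) ?_
    intro i hi
    fin_cases i <;> simp_all
  by_cases h12 : D 1 = D 2
  · refine bad_of_hom hn hP hD hgP hc 0 (D 1) (hD 1) h01 ?_
    intro i hi
    fin_cases i <;> simp_all
  · refine bad_of_inj hn hP hD hgP hc ?_
    intro i j hij
    fin_cases i <;> fin_cases j <;> simp_all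

section helper
open Topology
attribute [local instance] Matrix.normedAddCommGroup Matrix.normedSpace


lemma norm_mulVec3 (A : Matrix (Fin 3) (Fin 3) ℂ) (x : Fin 3 → ℂ) :
    ‖A.mulVec x‖ ≤ 3 * ‖A‖ * ‖x‖ := by
  rw [pi_norm_le_iff_of_nonneg (by positivity)]
  intro i
  simp only [Matrix.mulVec, dotProduct]
  refine (norm_sum_le _ _).trans ?_
  calc ∑ j, ‖A i j * x j‖ ≤ ∑ _j : Fin 3, ‖A‖ * ‖x‖ := by
        refine Finset.sum_le_sum fun j _ => ?_
        rw [norm_mul]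
        exact mul_le_mul (A.norm_entry_le_entrywise_sup_norm) (norm_le_pi_norm x j)
          (norm_nonneg _) (norm_nonneg _)
    _ = _ := by simp; ring

lemma exists_col (A : Matrix (Fin 3) (Fin 3) ℂ) :
    ∃ j, ‖A‖ ≤ ‖A.mulVec (Pi.single j 1)‖ := by
  by_contra hcon
  push Not at hcon
  have hpos : 0 < ‖A‖ := (norm_nonneg _).trans_lt (hcon 0)
  refine lt_irrefl ‖A‖ ((Matrix.norm_lt_iff hpos).mpr ?_)
  intro i j
  refine lt_of_le_of_lt ?_ (hcon j)
  refine le_trans ?_ (norm_le_pi_norm _ i)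
  simp

lemma norm_single1 (j : Fin 3) : ‖(Pi.single j 1 : Fin 3 → ℂ)‖ = 1 := by
  apply le_antisymm
  · rw [pi_norm_le_iff_of_nonneg zero_le_one]
    intro i
    by_cases h : i = j
    · subst h; simp
    · simp [h]
  · have := norm_le_pi_norm (Pi.single j 1 : Fin 3 → ℂ) j
    simpa using this

lemma cond_step {n : ℕ} {Φ : MvPolynomial (Fin 3) ℂ} {δ K : ℝ} (hδ : 0 < δ)
    (h1 : ∀ x, δ * ‖x‖ ^ (n - 1) ≤ ‖grad Φ x‖) (h2 : ∀ x, ‖x‖ = 1 → ‖grad Φ x‖ ≤ K)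
    {g g' : Matrix (Fin 3) (Fin 3) ℂ} (hg : g * g' = 1) {c : ℂ} (hc : substMat g Φ = c • Φ) :
    δ * ‖g‖ ^ (n - 1) ≤ ‖c‖ * 3 * ‖g'‖ * K := by
  obtain ⟨j, hj⟩ := exists_col g
  have e1 : g.transpose.mulVec (grad Φ (g.mulVec (Pi.single j 1))) =
      c • grad Φ (Pi.single j 1) := by
    rw [← grad_substMat, hc, grad_smul]
  have e2 : grad Φ (g.mulVec (Pi.single j 1)) =
      g'.transpose.mulVec (c • grad Φ (Pi.single j 1)) := by
    rw [← e1, Matrix.mulVec_mulVec, ← Matrix.transpose_mul, hg]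
    simp
  calc δ * ‖g‖ ^ (n - 1) ≤ δ * ‖g.mulVec (Pi.single j 1)‖ ^ (n - 1) := by gcongr
    _ ≤ ‖grad Φ (g.mulVec (Pi.single j 1))‖ := h1 _
    _ ≤ 3 * ‖g'.transpose‖ * ‖c • grad Φ (Pi.single j 1)‖ := by rw [e2]; exact norm_mulVec3 _ _
    _ ≤ 3 * ‖g'‖ * (‖c‖ * K) := by
      rw [Matrix.norm_transpose, norm_smul]
      gcongr
      exact h2 _ (norm_single1 j)
    _ = _ := by ring

lemma cond_bound {n : ℕ} (hn : 4 ≤ n) {Φ : MvPolynomial (Fin 3) ℂ} {δ K : ℝ} (hδ : 0 < δ)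
    (h1 : ∀ x, δ * ‖x‖ ^ (n - 1) ≤ ‖grad Φ x‖) (h2 : ∀ x, ‖x‖ = 1 → ‖grad Φ x‖ ≤ K)
    {g g' : Matrix (Fin 3) (Fin 3) ℂ} (hg : g * g' = 1) {c : ℂ} (hc0 : c ≠ 0)
    (hc : substMat g Φ = c • Φ) :
    ‖g‖ * ‖g'‖ ≤ max 1 (9 * K ^ 2 / δ ^ 2) := by
  have hg' : g' * g = 1 := mul_eq_one_comm.mp hg
  have hc' : substMat g' Φ = c⁻¹ • Φ := by
    have : substMat g' (substMat g Φ) = c • substMat g' Φ := by rw [hc, map_smul]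
    rw [substMat_substMat, hg, substMat_one] at this
    rw [eq_inv_smul_iff₀ hc0, ← this]
  have a1 := cond_step hδ h1 h2 hg hc
  have a2 := cond_step hδ h1 h2 hg' hc'
  have hK : 0 ≤ K := (norm_nonneg _).trans (h2 _ (norm_single1 0))
  have a3 := mul_le_mul a1 a2 (by positivity) (by positivity)
  set κ := ‖g‖ * ‖g'‖ with hκ
  have a4 : δ ^ 2 * κ ^ (n - 1) ≤ 9 * K ^ 2 * κ := by
    have : ‖c‖ * ‖c⁻¹‖ = 1 := by rw [← norm_mul, mul_inv_cancel₀ hc0, norm_one]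
    calc _ = δ * ‖g‖ ^ (n - 1) * (δ * ‖g'‖ ^ (n - 1)) := by rw [hκ, mul_pow]; ring
      _ ≤ _ := a3
      _ = (‖c‖ * ‖c⁻¹‖) * (9 * K ^ 2 * κ) := by rw [hκ]; ring
      _ = _ := by rw [this, one_mul]
  rcases le_total κ 1 with h | h
  · exact h.trans (le_max_left _ _)
  · refine le_trans ?_ (le_max_right _ _)
    rw [le_div_iff₀ (by positivity)]
    have a5 : κ ^ 2 ≤ κ ^ (n - 1) := pow_le_pow_right₀ h (by omega)
    have a6 : δ ^ 2 * κ ^ 2 ≤ 9 * K ^ 2 * κ := le_trans (by gcongr) a4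
    have hκ0 : 0 < κ := by linarith
    have a7 : κ * (κ * δ ^ 2) ≤ κ * (9 * K ^ 2) := by linarith
    exact le_of_mul_le_mul_left a7 hκ0

lemma substMat_pow {Φ : MvPolynomial (Fin 3) ℂ} {g : Matrix (Fin 3) (Fin 3) ℂ} {c : ℂ}
    (hc : substMat g Φ = c • Φ) (k : ℕ) : substMat (g ^ k) Φ = c ^ k • Φ := by
  induction k with
  | zero => simp [substMat_one]
  | succ k ih => rw [pow_succ, ← substMat_substMat, ih, map_smul, hc, smul_smul, pow_succ]

lemma no_jordan {g g' : Matrix (Fin 3) (Fin 3) ℂ} (hg : g * g' = 1) {M : ℝ}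
    (hM : ∀ k : ℕ, ‖g ^ k‖ * ‖g' ^ k‖ ≤ M) {α : ℂ} {v w : Fin 3 → ℂ}
    (hv : g.mulVec v = α • v + w) (hw : g.mulVec w = α • w) : w = 0 := by
  by_contra hw0
  have hg' : g' * g = 1 := mul_eq_one_comm.mp hg
  have hwk : ∀ k : ℕ, (g ^ k).mulVec w = α ^ k • w := by
    intro k
    induction k with
    | zero => simp
    | succ k ih =>
      rw [pow_succ, ← Matrix.mulVec_mulVec, hw, Matrix.mulVec_smul, ih, smul_smul, pow_succ]
      ring_nf
  have hvk : ∀ k : ℕ, α • (g ^ k).mulVec v = α ^ k • (α • v + (k : ℂ) • w) := by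
    intro k
    induction k with
    | zero => simp
    | succ k ih =>
      rw [pow_succ', ← Matrix.mulVec_mulVec, ← Matrix.mulVec_smul, ih, Matrix.mulVec_smul,
        Matrix.mulVec_add, Matrix.mulVec_smul, Matrix.mulVec_smul, hv, hw]
      funext i
      simp only [Pi.smul_apply, Pi.add_apply, smul_eq_mul]
      push_cast
      ring
  have hgg : ∀ k : ℕ, g' ^ k * g ^ k = 1 := by
    intro k
    have hcomm : Commute g' g := by unfold Commute SemiconjBy; rw [hg, hg']
    rw [← hcomm.mul_pow, hg', one_pow]
  have hwn : 0 < ‖w‖ := norm_pos_iff.mpr hw0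
  have hlow : ∀ k : ℕ, 1 ≤ 3 * ‖g' ^ k‖ * ‖α‖ ^ k := by
    intro k
    have e : w = (g' ^ k).mulVec (α ^ k • w) := by
      rw [← hwk, Matrix.mulVec_mulVec, hgg, Matrix.one_mulVec]
    have := norm_mulVec3 (g' ^ k) (α ^ k • w)
    rw [← e, norm_smul, norm_pow] at this
    have h2 : 1 * ‖w‖ ≤ (3 * ‖g' ^ k‖ * ‖α‖ ^ k) * ‖w‖ := by linarith
    exact le_of_mul_le_mul_right h2 hwn
  obtain ⟨k, hk⟩ := exists_nat_gt ((9 * ‖α‖ * M * ‖v‖ + ‖α‖ * ‖v‖) / ‖w‖)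
  rw [div_lt_iff₀ hwn] at hk
  have h1 : ‖α‖ * ‖(g ^ k).mulVec v‖ = ‖α‖ ^ k * ‖α • v + (k : ℂ) • w‖ := by
    rw [← norm_smul, hvk, norm_smul, norm_pow]
  have h2 : (k : ℝ) * ‖w‖ - ‖α‖ * ‖v‖ ≤ ‖α • v + (k : ℂ) • w‖ := by
    have := norm_sub_le (α • v + (k : ℂ) • w) (α • v)
    rw [add_sub_cancel_left, norm_smul, norm_smul, Complex.norm_natCast] at this
    linarith
  set r := ‖α • v + (k : ℂ) • w‖ with hr
  have hr0 : 0 ≤ r := norm_nonneg _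
  have h3 : r ≤ 9 * ‖α‖ * M * ‖v‖ := by
    calc r = 1 * r := (one_mul r).symm
      _ ≤ (3 * ‖g' ^ k‖ * ‖α‖ ^ k) * r := by gcongr; exact hlow k
      _ = 3 * ‖g' ^ k‖ * (‖α‖ * ‖(g ^ k).mulVec v‖) := by rw [h1]; ring
      _ ≤ 3 * ‖g' ^ k‖ * (‖α‖ * (3 * ‖g ^ k‖ * ‖v‖)) := by gcongr; exact norm_mulVec3 _ _
      _ = 9 * ‖α‖ * (‖g ^ k‖ * ‖g' ^ k‖) * ‖v‖ := by ring
      _ ≤ _ := by gcongr; exact hM k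
  linarith

lemma exists_diag {g g' : Matrix (Fin 3) (Fin 3) ℂ} (hg : g * g' = 1) {M : ℝ}
    (hM : ∀ k : ℕ, ‖g ^ k‖ * ‖g' ^ k‖ ≤ M) :
    ∃ (P : Matrix (Fin 3) (Fin 3) ℂ) (D : Fin 3 → ℂ), P.det ≠ 0 ∧ (∀ i, D i ≠ 0) ∧
      g * P = P * Matrix.diagonal D := by
  have hg' : g' * g = 1 := mul_eq_one_comm.mp hg
  let f : Module.End ℂ (Fin 3 → ℂ) := Matrix.toLin' g
  let s : Set (Fin 3 → ℂ) := {v | ∃ α : ℂ, f v = α • v}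
  have hspan : ⊤ ≤ Submodule.span ℂ s := by
    rw [← Module.End.iSup_maxGenEigenspace_eq_top f]
    refine iSup_le fun α => ?_
    intro v hv
    rw [Module.End.mem_maxGenEigenspace] at hv
    obtain ⟨k, hk⟩ := hv
    have hsq : ∀ u, (f - α • 1) ((f - α • 1) u) = 0 → (f - α • 1) u = 0 := by
      intro u hu
      refine no_jordan hg hM (α := α) (v := u) ?_ ?_
      · simp [f]
      · rw [LinearMap.sub_apply, sub_eq_zero] at hu
        exact hu
    have hstep : ∀ k : ℕ, ∀ u, ((f - α • 1) ^ (k + 1)) u = 0 → (f - α • 1) u = 0 := by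
      intro k
      induction k with
      | zero => intro u hu; simpa using hu
      | succ k ih =>
        intro u hu
        rw [pow_succ, Module.End.mul_apply] at hu
        exact hsq u (ih _ hu)
    have hv1 : (f - α • 1) v = 0 := by
      cases k with
      | zero =>
        have : v = 0 := by simpa using hk
        rw [this, map_zero]
      | succ k => exact hstep k v hk
    apply Submodule.subset_span
    refine ⟨α, ?_⟩
    rw [LinearMap.sub_apply, sub_eq_zero] at hv1
    exact hv1
  let b0 := Module.Basis.ofSpan hspan
  have hb0 : ∀ i, b0 i ∈ s := fun i => Module.Basis.ofSpan_subset hspan ⟨i, rfl⟩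
  have : Finite _ := Module.Finite.finite_basis b0
  have := Fintype.ofFinite (hspan |> fun _ => (↑((linearIndepOn_empty ℂ id).extend (Set.empty_subset s))))
  have hcard := Module.finrank_eq_card_basis b0
  rw [Module.finrank_fin_fun] at hcard
  let b := b0.reindex ((Fintype.equivFin _).trans (finCongr hcard.symm))
  have hb : ∀ i, ∃ α : ℂ, f (b i) = α • b i := by
    intro i
    simp only [b, Module.Basis.reindex_apply]
    exact hb0 _
  choose D hD using hb
  have hPe : ∀ i j, (Pi.basisFun ℂ (Fin 3)).toMatrix b i j = b j i := by
    intro i j; simp [Module.Basis.toMatrix_apply]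
  refine ⟨(Pi.basisFun ℂ (Fin 3)).toMatrix b, D, ?_, ?_, ?_⟩
  · have := (Pi.basisFun ℂ (Fin 3)).toMatrix_mul_toMatrix_flip b
    intro h0
    have h := congrArg Matrix.det this
    rw [Matrix.det_mul, h0] at h
    simp at h
  · intro i h0
    have h1 := hD i
    rw [h0, zero_smul] at h1
    have h2 : b i = 0 := by
      have : g'.mulVec (g.mulVec (b i)) = 0 := by
        have : g.mulVec (b i) = 0 := h1
        rw [this, Matrix.mulVec_zero]
      rwa [Matrix.mulVec_mulVec, hg', Matrix.one_mulVec] at this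
    exact b.ne_zero i h2
  · ext k j
    rw [Matrix.mul_diagonal, Matrix.mul_apply]
    simp only [hPe]
    have := congrFun (hD j) k
    simp only [f, Matrix.toLin'_apply, Matrix.mulVec, dotProduct, Pi.smul_apply, smul_eq_mul] at this
    rw [this]; ring



/-- trivial stabilizer -/
def Triv (Φ : MvPolynomial (Fin 3) ℂ) : Prop :=
  ∀ g g' : Matrix (Fin 3) (Fin 3) ℂ, g * g' = 1 → ∀ c : ℂ, c ≠ 0 → substMat g Φ = c • Φ →
    ∃ t : ℂ, g = t • 1

lemma continuous_coeffH (n : ℕ) (d : Fin 3 →₀ ℕ) :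
    Continuous fun Φ : ↥(homogeneousSubmodule (Fin 3) ℂ n) =>
      coeff d (Φ : MvPolynomial (Fin 3) ℂ) := by
  have h : Continuous (fun (Φ : MvPolynomial (Fin 3) ℂ) d => coeff d Φ) := continuous_induced_dom
  exact ((continuous_apply d).comp h).comp continuous_subtype_val

lemma continuous_evalL (n : ℕ) (L : MvPolynomial (Fin 3) ℂ →ₗ[ℂ] MvPolynomial (Fin 3) ℂ) :
    Continuous fun p : ↥(homogeneousSubmodule (Fin 3) ℂ n) × (Fin 3 → ℂ) =>
      eval p.2 (L (p.1 : MvPolynomial (Fin 3) ℂ)) := by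
  have : (fun p : ↥(homogeneousSubmodule (Fin 3) ℂ n) × (Fin 3 → ℂ) =>
      eval p.2 (L (p.1 : MvPolynomial (Fin 3) ℂ))) =
      fun p => ∑ d : Dn n, coeff d.1 (p.1 : MvPolynomial (Fin 3) ℂ) *
        eval p.2 (L (monomial d.1 1)) := by
    funext p
    have hp : (p.1 : MvPolynomial (Fin 3) ℂ).IsHomogeneous n := p.1.2
    conv_lhs => rw [← pol_coeff hp, pol]
    rw [map_sum, map_sum]
    refine Finset.sum_congr rfl fun d _ => ?_
    rw [show monomial d.1 (coeff d.1 (p.1 : MvPolynomial (Fin 3) ℂ)) =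
      coeff d.1 (p.1 : MvPolynomial (Fin 3) ℂ) • monomial d.1 (1 : ℂ) by simp [smul_monomial]]
    rw [map_smul, smul_eval]
  rw [this]
  refine continuous_finsetSum _ fun d _ => ?_
  exact ((continuous_coeffH n d.1).comp continuous_fst).mul
    ((MvPolynomial.continuous_eval _).comp continuous_snd)

lemma continuous_gradH (n : ℕ) :
    Continuous fun p : ↥(homogeneousSubmodule (Fin 3) ℂ n) × (Fin 3 → ℂ) =>
      grad (p.1 : MvPolynomial (Fin 3) ℂ) p.2 := by
  rw [continuous_pi_iff]
  intro i
  exact continuous_evalL n (pderiv i).toLinearMap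

lemma continuous_evalH (n : ℕ) :
    Continuous fun p : ↥(homogeneousSubmodule (Fin 3) ℂ n) × (Fin 3 → ℂ) =>
      eval p.2 (p.1 : MvPolynomial (Fin 3) ℂ) :=
  continuous_evalL n LinearMap.id

/-- quantitative smoothness -/
def QS (n : ℕ) (δ K : ℝ) (Φ : MvPolynomial (Fin 3) ℂ) : Prop :=
  (∀ x, δ * ‖x‖ ^ (n - 1) ≤ ‖grad Φ x‖) ∧ (∀ x, ‖x‖ = 1 → ‖grad Φ x‖ ≤ K)

lemma QS.smooth {n : ℕ} {δ K : ℝ} (hδ : 0 < δ) {Φ : MvPolynomial (Fin 3) ℂ} (h : QS n δ K Φ) :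
    SmoothCurve Φ := by
  intro q hq
  by_contra hq0
  have h1 := h.1 q
  have : grad Φ q = 0 := funext hq
  rw [this, norm_zero] at h1
  have : 0 < ‖q‖ := norm_pos_iff.mpr hq0
  have : 0 < δ * ‖q‖ ^ (n - 1) := by positivity
  linarith

lemma QS_of_sphere {n : ℕ} (hn : 4 ≤ n) {δ K : ℝ} {Φ : MvPolynomial (Fin 3) ℂ}
    (hh : Φ.IsHomogeneous n)
    (hΦ : ∀ x : Fin 3 → ℂ, ‖x‖ = 1 → δ < ‖grad Φ x‖ ∧ ‖grad Φ x‖ < K) : QS n δ K Φ := by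
  refine ⟨fun x => ?_, fun x hx => (hΦ x hx).2.le⟩
  by_cases hx : x = 0
  · rw [hx, norm_zero, zero_pow (by omega), mul_zero]
    exact norm_nonneg _
  · have hxn : 0 < ‖x‖ := norm_pos_iff.mpr hx
    obtain ⟨r, hr⟩ : ∃ r : ℝ, r = ‖x‖ := ⟨_, rfl⟩
    rw [← hr] at hxn ⊢
    obtain ⟨u, hu⟩ : ∃ u, u = (r : ℂ)⁻¹ • x := ⟨_, rfl⟩
    have hu1 : ‖u‖ = 1 := by
      rw [hu, norm_smul, norm_inv, Complex.norm_real, Real.norm_of_nonneg hxn.le, ← hr,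
        inv_mul_cancel₀ hxn.ne']
    have hxe : x = (r : ℂ) • u := by
      rw [hu, smul_smul, mul_inv_cancel₀ (by exact_mod_cast hxn.ne'), one_smul]
    rw [hxe, grad_smul_hom hh, norm_smul, norm_pow, Complex.norm_real,
      Real.norm_of_nonneg hxn.le, mul_comm]
    exact mul_le_mul_of_nonneg_left (hΦ u hu1).1.le (pow_nonneg hxn.le _)

lemma sphere_gen {H : Type*} [TopologicalSpace H] {G : H × (Fin 3 → ℂ) → ℝ} (hG : Continuous G)
    (h0 : H) (hp : ∀ x, ‖x‖ = 1 → 0 < G (h0, x)) :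
    ∃ δ K : ℝ, 0 < δ ∧ ∀ᶠ h in 𝓝 h0, ∀ x : Fin 3 → ℂ, ‖x‖ = 1 → δ < G (h, x) ∧ G (h, x) < K := by
  have hcomp : IsCompact (Metric.sphere (0 : Fin 3 → ℂ) 1) := isCompact_sphere _ _
  have hne : (Metric.sphere (0 : Fin 3 → ℂ) 1).Nonempty :=
    ⟨Pi.single 0 1, by rw [mem_sphere_zero_iff_norm]; exact norm_single1 0⟩
  have hc0 : Continuous fun x => G (h0, x) := hG.comp (Continuous.prodMk_right h0)
  obtain ⟨x₁, hx₁, hmin⟩ := hcomp.exists_isMinOn hne hc0.continuousOn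
  obtain ⟨x₂, hx₂, hmax⟩ := hcomp.exists_isMaxOn hne hc0.continuousOn
  have hpos := hp x₁ (by rw [← mem_sphere_zero_iff_norm]; exact hx₁)
  refine ⟨G (h0, x₁) / 2, G (h0, x₂) + 1, by linarith, ?_⟩
  have key : ∀ᶠ h in 𝓝 h0, ∀ x ∈ Metric.sphere (0 : Fin 3 → ℂ) 1,
      G (h0, x₁) / 2 < G (h, x) ∧ G (h, x) < G (h0, x₂) + 1 := by
    apply hcomp.eventually_forall_of_forall_eventually
    intro x hx
    have e1 : G (h0, x₁) / 2 < G (h0, x) := by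
      have : G (h0, x₁) ≤ G (h0, x) := hmin hx
      linarith
    have e2 : G (h0, x) < G (h0, x₂) + 1 := by
      have : G (h0, x) ≤ G (h0, x₂) := hmax hx
      linarith
    exact (continuousAt_const.eventually_lt (hG.continuousAt (x := (h0, x))) e1).and
      ((hG.continuousAt (x := (h0, x))).eventually_lt continuousAt_const e2)
  filter_upwards [key] with h hh x hx
  exact hh x (by rw [mem_sphere_zero_iff_norm]; exact hx)

lemma exists_QS {n : ℕ} (hn : 4 ≤ n) (Φ₀ : ↥(homogeneousSubmodule (Fin 3) ℂ n))
    (hs : SmoothCurve (Φ₀ : MvPolynomial (Fin 3) ℂ)) :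
    ∃ δ K : ℝ, 0 < δ ∧ ∀ᶠ Φ : ↥(homogeneousSubmodule (Fin 3) ℂ n) in 𝓝 Φ₀,
      QS n δ K (Φ : MvPolynomial (Fin 3) ℂ) := by
  obtain ⟨δ, K, hδ, h⟩ := sphere_gen (G := fun p : ↥(homogeneousSubmodule (Fin 3) ℂ n) ×
    (Fin 3 → ℂ) => ‖grad (p.1 : MvPolynomial (Fin 3) ℂ) p.2‖) (continuous_gradH n).norm Φ₀ (by
      intro x hx
      refine norm_pos_iff.mpr fun h => ?_
      have := hs x (fun i => congrFun h i)
      rw [this] at hx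
      simp at hx)
  exact ⟨δ, K, hδ, h.mono fun Φ hΦ => QS_of_sphere hn Φ.2 hΦ⟩

lemma diag_of_stab {n : ℕ} (hn : 4 ≤ n) {δ K : ℝ} (hδ : 0 < δ) {Φ : MvPolynomial (Fin 3) ℂ}
    (h : QS n δ K Φ)
    {g g' : Matrix (Fin 3) (Fin 3) ℂ} (hg : g * g' = 1) {c : ℂ} (hc0 : c ≠ 0)
    (hc : substMat g Φ = c • Φ) (hns : ¬ ∃ t : ℂ, g = t • 1) :
    (∀ k : ℕ, g ^ k * g' ^ k = 1 ∧ ‖g ^ k‖ * ‖g' ^ k‖ ≤ max 1 (9 * K ^ 2 / δ ^ 2)) ∧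
    ∃ (P : Matrix (Fin 3) (Fin 3) ℂ) (D : Fin 3 → ℂ), P.det ≠ 0 ∧ (∀ i, D i ≠ 0) ∧
      g * P = P * Matrix.diagonal D ∧ ¬ ∃ a, ∀ i, D i = a := by
  have hg' : g' * g = 1 := mul_eq_one_comm.mp hg
  have hk : ∀ k : ℕ, g ^ k * g' ^ k = 1 := by
    intro k
    have hcomm : Commute g g' := by unfold Commute SemiconjBy; rw [hg, hg']
    rw [← hcomm.mul_pow, hg, one_pow]
  have hM : ∀ k : ℕ, ‖g ^ k‖ * ‖g' ^ k‖ ≤ max 1 (9 * K ^ 2 / δ ^ 2) := fun k =>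
    cond_bound hn hδ h.1 h.2 (hk k) (pow_ne_zero k hc0) (substMat_pow hc k)
  refine ⟨fun k => ⟨hk k, hM k⟩, ?_⟩
  obtain ⟨P, D, hP, hD, hgP⟩ := exists_diag hg hM
  refine ⟨P, D, hP, hD, hgP, ?_⟩
  rintro ⟨a, ha⟩
  apply hns
  refine ⟨a, ?_⟩
  have hU : IsUnit P.det := isUnit_iff_ne_zero.mpr hP
  have hDa : Matrix.diagonal D = a • (1 : Matrix (Fin 3) (Fin 3) ℂ) := by
    rw [Matrix.smul_one_eq_diagonal]
    congr 1
    funext i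
    exact ha i
  calc g = g * P * P⁻¹ := by rw [Matrix.mul_assoc, Matrix.mul_nonsing_inv P hU, Matrix.mul_one]
    _ = a • 1 := by
      rw [hgP, hDa, Matrix.mul_smul, Matrix.mul_one, Matrix.smul_mul, Matrix.mul_nonsing_inv P hU]

lemma good_of_not_bad {n : ℕ} (hn : 4 ≤ n) (Φ : ↥(homogeneousSubmodule (Fin 3) ℂ n))
    (hb : ¬ Bad n (Φ : MvPolynomial (Fin 3) ℂ)) :
    SmoothCurve (Φ : MvPolynomial (Fin 3) ℂ) ∧ Triv (Φ : MvPolynomial (Fin 3) ℂ) := by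
  have hs : SmoothCurve (Φ : MvPolynomial (Fin 3) ℂ) := by
    by_contra hs
    exact hb (bad_of_sing hn Φ.2 hs)
  refine ⟨hs, ?_⟩
  intro g g' hg c hc0 hc
  by_contra hns
  obtain ⟨δ, K, hδ, hev⟩ := exists_QS hn Φ hs
  obtain ⟨-, P, D, hP, hD, hgP, hnc⟩ := diag_of_stab hn hδ hev.self_of_nhds hg hc0 hc hns
  exact hb (bad_of_stab hn hP hD hgP hc hnc)

lemma exists_pow_far {r : ℂ} (hr : r ≠ 1) : ∃ m : ℕ, 1 / 2 ≤ ‖r ^ m - 1‖ := by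
  by_contra hcon
  push Not at hcon
  have hgrow : ∀ j : ℕ, (3 / 2 : ℝ) ^ j * ‖r - 1‖ ≤ ‖r ^ (2 ^ j) - 1‖ := by
    intro j
    induction j with
    | zero => simp
    | succ j ih =>
      set z := r ^ (2 ^ j) with hz
      have h1 : r ^ (2 ^ (j + 1)) - 1 = (z + 1) * (z - 1) := by
        rw [hz, pow_succ 2 j, pow_mul]; ring
      have h2 : 3 / 2 ≤ ‖z + 1‖ := by
        have := hcon (2 ^ j)
        have h3 : ‖(2 : ℂ)‖ ≤ ‖z + 1‖ + ‖z - 1‖ := by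
          have := norm_sub_le (z + 1) (z - 1)
          rwa [show z + 1 - (z - 1) = 2 by ring] at this
        simp at h3
        linarith
      rw [h1, norm_mul, pow_succ]
      calc (3 / 2 : ℝ) ^ j * (3 / 2) * ‖r - 1‖ = 3 / 2 * ((3 / 2 : ℝ) ^ j * ‖r - 1‖) := by ring
        _ ≤ _ := by gcongr
  have hpos : 0 < ‖r - 1‖ := norm_pos_iff.mpr (sub_ne_zero.mpr hr)
  obtain ⟨j, hj⟩ := pow_unbounded_of_one_lt (1 / ‖r - 1‖) (show (1 : ℝ) < 3 / 2 by norm_num)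
  rw [div_lt_iff₀ hpos] at hj
  have := hgrow j
  have := hcon (2 ^ j)
  linarith

/-- auxiliary parameter space -/
abbrev YY := Matrix (Fin 3) (Fin 3) ℂ × Matrix (Fin 3) (Fin 3) ℂ × (Fin 3 → ℂ) × (Fin 3 → ℂ) × ℂ × ℂ

/-- closed condition -/
def QQ (Φ : MvPolynomial (Fin 3) ℂ) (y : YY) : Prop :=
  y.1 * y.2.1 = 1 ∧ y.1.mulVec y.2.2.1 = y.2.2.2.2.1 • y.2.2.1 ∧
  y.1.mulVec y.2.2.2.1 = y.2.2.2.2.2 • y.2.2.2.1 ∧ ‖y.2.2.2.2.2‖ ≤ 2 * ‖y.2.2.2.2.1 - y.2.2.2.2.2‖ ∧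
  ∀ x z, eval (y.1.mulVec x) Φ * eval z Φ = eval (y.1.mulVec z) Φ * eval x Φ

lemma isClosed_QQ_gen {X : Type*} [TopologicalSpace X] {A B : X → Matrix (Fin 3) (Fin 3) ℂ}
    {v w : X → Fin 3 → ℂ} {a b : X → ℂ} {E : (Fin 3 → ℂ) → X → ℂ} {F : (Fin 3 → ℂ) → X → ℂ}
    (hA : Continuous A) (hB : Continuous B) (hv : Continuous v) (hw : Continuous w)
    (ha : Continuous a) (hb : Continuous b) (hE : ∀ x, Continuous (E x))
    (hF : ∀ x, Continuous (F x)) :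
    IsClosed {p : X | A p * B p = 1 ∧ (A p).mulVec (v p) = a p • v p ∧
      (A p).mulVec (w p) = b p • w p ∧ ‖b p‖ ≤ 2 * ‖a p - b p‖ ∧
      ∀ x z, E x p * F z p = E z p * F x p} := by
  have h1 : IsClosed {p : X | A p * B p = 1} :=
    isClosed_eq (Continuous.matrix_mul hA hB) continuous_const
  have h2 : IsClosed {p : X | (A p).mulVec (v p) = a p • v p} :=
    isClosed_eq (Continuous.matrix_mulVec hA hv) (ha.smul hv)
  have h3 : IsClosed {p : X | (A p).mulVec (w p) = b p • w p} :=
    isClosed_eq (Continuous.matrix_mulVec hA hw) (hb.smul hw)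
  have h4 : IsClosed {p : X | ‖b p‖ ≤ 2 * ‖a p - b p‖} :=
    isClosed_le hb.norm (continuous_const.mul (ha.sub hb).norm)
  have h5 : IsClosed {p : X | ∀ x z, E x p * F z p = E z p * F x p} := by
    simp only [Set.ofPred_forall]
    exact isClosed_iInter fun x => isClosed_iInter fun z =>
      isClosed_eq ((hE x).mul (hF z)) ((hE z).mul (hF x))
  exact h1.inter (h2.inter (h3.inter (h4.inter h5)))

lemma isClosed_QQ_gen2 {H : Type*} [TopologicalSpace H] {e : H × (Fin 3 → ℂ) → ℂ}
    (he : Continuous e) :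
    IsClosed {p : H × YY | p.2.1 * p.2.2.1 = 1 ∧
      p.2.1.mulVec p.2.2.2.1 = p.2.2.2.2.2.1 • p.2.2.2.1 ∧
      p.2.1.mulVec p.2.2.2.2.1 = p.2.2.2.2.2.2 • p.2.2.2.2.1 ∧
      ‖p.2.2.2.2.2.2‖ ≤ 2 * ‖p.2.2.2.2.2.1 - p.2.2.2.2.2.2‖ ∧
      ∀ x z, e (p.1, p.2.1.mulVec x) * e (p.1, z) = e (p.1, p.2.1.mulVec z) * e (p.1, x)} := by
  have hA : Continuous fun p : H × YY => p.2.1 := continuous_fst.comp continuous_snd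
  have hR : Continuous fun p : H × YY => p.2.2 := continuous_snd.comp continuous_snd
  have hR2 : Continuous fun p : H × YY => p.2.2.2 := continuous_snd.comp hR
  have hR3 : Continuous fun p : H × YY => p.2.2.2.2 := continuous_snd.comp hR2
  have hR4 : Continuous fun p : H × YY => p.2.2.2.2.2 := continuous_snd.comp hR3
  have hE : ∀ x : Fin 3 → ℂ, Continuous fun p : H × YY => e (p.1, p.2.1.mulVec x) := by
    intro x
    have h1 : Continuous fun p : H × YY => p.2.1.mulVec x :=
      Continuous.matrix_mulVec hA continuous_const
    exact he.comp (continuous_fst.prodMk h1)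
  have hE' : ∀ x : Fin 3 → ℂ, Continuous fun p : H × YY => e (p.1, x) := by
    intro x
    have h1 : Continuous fun p : H × YY => x := continuous_const
    exact he.comp (continuous_fst.prodMk h1)
  exact isClosed_QQ_gen hA (continuous_fst.comp hR) (continuous_fst.comp hR2)
    (continuous_fst.comp hR3) (continuous_fst.comp hR4) (continuous_snd.comp hR4) hE hE'

lemma isClosed_QQ (n : ℕ) : IsClosed {p : ↥(homogeneousSubmodule (Fin 3) ℂ n) × YY |
    QQ (p.1 : MvPolynomial (Fin 3) ℂ) p.2} := by
  unfold QQ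
  exact isClosed_QQ_gen2 (continuous_evalH n)

lemma not_QQ {Φ : MvPolynomial (Fin 3) ℂ} (hs : SmoothCurve Φ) (ht : Triv Φ) (y : YY)
    (hv0 : y.2.2.1 ≠ 0) (hw0 : y.2.2.2.1 ≠ 0) : ¬ QQ Φ y := by
  obtain ⟨h, h', v, w, a, b⟩ := y
  rintro ⟨hh, hv, hw, hab, hprop⟩
  simp only at hh hv hw hab hprop hv0 hw0
  have hh' : h' * h = 1 := mul_eq_one_comm.mp hh
  have hΦ0 : Φ ≠ 0 := by
    intro h0
    have := hs (Pi.single 0 1) (by intro i; rw [h0]; simp)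
    have := congrFun this 0
    simp at this
  obtain ⟨z, hz⟩ : ∃ z, eval z Φ ≠ 0 := by
    by_contra hcon
    push Not at hcon
    exact hΦ0 (MvPolynomial.funext fun x => by rw [hcon x]; simp)
  set c := eval (h.mulVec z) Φ / eval z Φ with hc
  have hstab : substMat h Φ = c • Φ := by
    apply MvPolynomial.funext
    intro x
    rw [eval_substMat, smul_eval, hc]
    have := hprop x z
    field_simp
    linear_combination this
  have hc0 : c ≠ 0 := by
    intro h0
    rw [h0, zero_smul] at hstab
    apply hΦ0
    rw [← substMat_one Φ, ← hh, ← substMat_substMat, hstab, map_zero]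
  obtain ⟨t, rfl⟩ := ht h h' hh c hc0 hstab
  rw [Matrix.smul_mulVec, Matrix.one_mulVec] at hv hw
  have h1 : t = a := smul_left_injective ℂ hv0 hv
  have h2 : t = b := smul_left_injective ℂ hw0 hw
  rw [← h1, ← h2, sub_self, norm_zero, mul_zero, norm_le_zero_iff] at hab
  rw [hab, zero_smul, zero_mul] at hh
  exact one_ne_zero hh.symm

lemma eig_norm_le {h : Matrix (Fin 3) (Fin 3) ℂ} (hh : ‖h‖ ≤ 1) {v : Fin 3 → ℂ} (hv : ‖v‖ = 1)
    {a : ℂ} (ha : h.mulVec v = a • v) : ‖a‖ ≤ 3 := by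
  have := norm_mulVec3 h v
  rw [ha, norm_smul, hv] at this
  linarith

lemma isOpen_good {n : ℕ} (hn : 4 ≤ n) : IsOpen {Φ : ↥(homogeneousSubmodule (Fin 3) ℂ n) |
    SmoothCurve (Φ : MvPolynomial (Fin 3) ℂ) ∧ Triv (Φ : MvPolynomial (Fin 3) ℂ)} := by
  rw [isOpen_iff_mem_nhds]
  rintro Φ₀ ⟨hs, ht⟩
  obtain ⟨δ, K, hδ, hQS⟩ := exists_QS hn Φ₀ hs
  set M := max 1 (9 * K ^ 2 / δ ^ 2) with hM
  haveI : ProperSpace (Matrix (Fin 3) (Fin 3) ℂ) := FiniteDimensional.proper ℂ _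
  let KK : Set YY := Metric.closedBall 0 1 ×ˢ (Metric.closedBall 0 M ×ˢ (Metric.sphere 0 1 ×ˢ
    (Metric.sphere 0 1 ×ˢ (Metric.closedBall 0 3 ×ˢ Metric.closedBall 0 3))))
  have hKK : IsCompact KK :=
    (isCompact_closedBall _ _).prod ((isCompact_closedBall _ _).prod ((isCompact_sphere _ _).prod
      ((isCompact_sphere _ _).prod ((isCompact_closedBall _ _).prod (isCompact_closedBall _ _)))))
  have key : ∀ᶠ Φ : ↥(homogeneousSubmodule (Fin 3) ℂ n) in 𝓝 Φ₀,
      ∀ y ∈ KK, ¬ QQ (Φ : MvPolynomial (Fin 3) ℂ) y := by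
    apply hKK.eventually_forall_of_forall_eventually
    rintro y ⟨-, -, hy3, hy4, -⟩
    refine (isClosed_QQ n).isOpen_compl.mem_nhds (x := (Φ₀, y)) ?_
    refine not_QQ hs ht y ?_ ?_
    · intro h0; rw [h0] at hy3; simp at hy3
    · intro h0; rw [h0] at hy4; simp at hy4
  filter_upwards [hQS, key] with Φ hΦ hΦk
  refine ⟨hΦ.smooth hδ, ?_⟩
  intro g g' hg c hc0 hc
  by_contra hns
  obtain ⟨hpow, P, D, hP, hD, hgP, hnc⟩ := diag_of_stab hn hδ hΦ hg hc0 hc hns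
  obtain ⟨i, j, hij⟩ : ∃ i j, D i ≠ D j := by
    by_contra hcon
    push Not at hcon
    exact hnc ⟨D 0, fun i => hcon i 0⟩
  have hr : D i / D j ≠ 1 := by
    intro h
    exact hij ((div_eq_one_iff_eq (hD j)).mp h)
  obtain ⟨m, hm⟩ := exists_pow_far hr
  -- eigenvectors
  have heig : ∀ l, ∃ u : Fin 3 → ℂ, ‖u‖ = 1 ∧ (g ^ m).mulVec u = D l ^ m • u := by
    intro l
    have hu0 : (fun k => P k l) ≠ 0 := by
      intro h0
      exact hP (Matrix.det_eq_zero_of_column_eq_zero l fun k => congrFun h0 k)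
    have hgu : g.mulVec (fun k => P k l) = D l • (fun k => P k l) := by
      funext k
      have := congrFun (congrFun hgP k) l
      rw [Matrix.mul_diagonal, Matrix.mul_apply] at this
      simp only [Matrix.mulVec, dotProduct, Pi.smul_apply, smul_eq_mul]
      rw [this]; ring
    generalize (fun k => P k l) = u0 at hu0 hgu
    have hgm : ∀ m : ℕ, (g ^ m).mulVec u0 = D l ^ m • u0 := by
      intro m
      induction m with
      | zero => simp
      | succ m ih =>
        rw [pow_succ, ← Matrix.mulVec_mulVec, hgu, Matrix.mulVec_smul, ih, smul_smul, pow_succ']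
    have hn0 : ‖u0‖ ≠ 0 := norm_ne_zero_iff.mpr hu0
    refine ⟨(‖u0‖ : ℂ)⁻¹ • u0, ?_, ?_⟩
    · rw [norm_smul, norm_inv, Complex.norm_real, norm_norm, inv_mul_cancel₀ hn0]
    · rw [Matrix.mulVec_smul, hgm, smul_comm]
  obtain ⟨v, hv1, hv⟩ := heig i
  obtain ⟨w, hw1, hw⟩ := heig j
  obtain ⟨hgm, hcond⟩ := hpow m
  have hG0 : g ^ m ≠ 0 := by
    intro h0
    rw [h0, zero_mul] at hgm
    exact one_ne_zero hgm.symm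
  set ρ : ℝ := ‖g ^ m‖ with hρ
  have hρ0 : 0 < ρ := norm_pos_iff.mpr hG0
  have hρc : (ρ : ℂ) ≠ 0 := by exact_mod_cast hρ0.ne'
  have hh1 : ‖(ρ : ℂ)⁻¹ • g ^ m‖ = 1 := by
    rw [norm_smul, norm_inv, Complex.norm_real, Real.norm_of_nonneg hρ0.le, ← hρ,
      inv_mul_cancel₀ hρ0.ne']
  have hh2 : ‖(ρ : ℂ) • g' ^ m‖ ≤ M := by
    rw [norm_smul, Complex.norm_real, Real.norm_of_nonneg hρ0.le]
    exact hcond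
  have hhv : ((ρ : ℂ)⁻¹ • g ^ m).mulVec v = ((ρ : ℂ)⁻¹ * D i ^ m) • v := by
    rw [Matrix.smul_mulVec, hv, smul_smul]
  have hhw : ((ρ : ℂ)⁻¹ • g ^ m).mulVec w = ((ρ : ℂ)⁻¹ * D j ^ m) • w := by
    rw [Matrix.smul_mulVec, hw, smul_smul]
  refine hΦk ((ρ : ℂ)⁻¹ • g ^ m, (ρ : ℂ) • g' ^ m, v, w, (ρ : ℂ)⁻¹ * D i ^ m, (ρ : ℂ)⁻¹ * D j ^ m)
    ?_ ?_
  · refine ⟨?_, ?_, ?_, ?_, ?_, ?_⟩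
    · rw [mem_closedBall_zero_iff]; exact hh1.le
    · rw [mem_closedBall_zero_iff]; exact hh2
    · rw [mem_sphere_zero_iff_norm]; exact hv1
    · rw [mem_sphere_zero_iff_norm]; exact hw1
    · rw [mem_closedBall_zero_iff]; exact eig_norm_le hh1.le hv1 hhv
    · rw [mem_closedBall_zero_iff]; exact eig_norm_le hh1.le hw1 hhw
  · refine ⟨?_, hhv, hhw, ?_, ?_⟩
    · change (ρ : ℂ)⁻¹ • g ^ m * (ρ : ℂ) • g' ^ m = 1
      rw [Matrix.smul_mul, Matrix.mul_smul, smul_smul, inv_mul_cancel₀ hρc, one_smul, hgm]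
    · change ‖(ρ : ℂ)⁻¹ * D j ^ m‖ ≤ 2 * ‖(ρ : ℂ)⁻¹ * D i ^ m - (ρ : ℂ)⁻¹ * D j ^ m‖
      have e : (ρ : ℂ)⁻¹ * D i ^ m - (ρ : ℂ)⁻¹ * D j ^ m =
          ((ρ : ℂ)⁻¹ * D j ^ m) * ((D i / D j) ^ m - 1) := by
        have := pow_ne_zero m (hD j)
        rw [div_pow]
        field_simp
      rw [e, norm_mul ((ρ : ℂ)⁻¹ * D j ^ m) ((D i / D j) ^ m - 1)]
      have := mul_le_mul_of_nonneg_left hm (norm_nonneg ((ρ : ℂ)⁻¹ * D j ^ m))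
      linarith
    · have hst : substMat ((ρ : ℂ)⁻¹ • g ^ m) (Φ : MvPolynomial (Fin 3) ℂ) =
          (((ρ : ℂ)⁻¹) ^ n * c ^ m) • (Φ : MvPolynomial (Fin 3) ℂ) := by
        rw [substMat_smul_hom Φ.2, substMat_pow hc, smul_smul]
      intro x z
      change eval (((ρ : ℂ)⁻¹ • g ^ m).mulVec x) _ * _ = eval (((ρ : ℂ)⁻¹ • g ^ m).mulVec z) _ * _
      rw [← eval_substMat, ← eval_substMat, hst, smul_eval, smul_eval]
      ring

lemma dense_good {n : ℕ} (hn : 4 ≤ n) : Dense {Φ : ↥(homogeneousSubmodule (Fin 3) ℂ n) |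
    SmoothCurve (Φ : MvPolynomial (Fin 3) ℂ) ∧ Triv (Φ : MvPolynomial (Fin 3) ℂ)} := by
  let F : (Dn n → ℂ) → ↥(homogeneousSubmodule (Fin 3) ℂ n) := fun c => ⟨pol n c, pol_hom n c⟩
  have hF : Continuous F := by
    refine Continuous.subtype_mk ?_ _
    rw [continuous_induced_rng, continuous_pi_iff]
    intro d
    simp only [Function.comp, pol, coeff_sum, coeff_monomial]
    refine continuous_finsetSum _ fun e _ => ?_
    split_ifs
    · exact continuous_apply e
    · exact continuous_const
  have hsurj : Function.Surjective F := by
    intro Φ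
    exact ⟨fun d => coeff d.1 (Φ : MvPolynomial (Fin 3) ℂ), Subtype.ext (pol_coeff Φ.2)⟩
  refine (hsurj.denseRange.dense_image hF (dense_not_bad n)).mono ?_
  rintro _ ⟨c, hc, rfl⟩
  exact good_of_not_bad hn _ hc

theorem main_aux (n : ℕ) (hn : 4 ≤ n) :
    ∃ W : Set ↥(homogeneousSubmodule (Fin 3) ℂ n), IsOpen W ∧ Dense W ∧
      ∀ Φ ∈ W, SmoothCurve (Φ : MvPolynomial (Fin 3) ℂ) ∧
        ∀ g : PGL3, ProjStab (Φ : MvPolynomial (Fin 3) ℂ) g → g = 1 := by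
  refine ⟨_, isOpen_good hn, dense_good hn, ?_⟩
  rintro Φ ⟨hs, ht⟩
  refine ⟨hs, ?_⟩
  rintro g ⟨γ, rfl, c, hc0, hc⟩
  obtain ⟨t, hγ⟩ := ht γ.val γ⁻¹.val (by simp) c hc0 hc
  rw [QuotientGroup.eq_one_iff, Subgroup.mem_center_iff]
  intro k
  apply Units.ext
  simp only [Units.val_mul]
  rw [hγ]
  simp

end helper

/-- **Statement 16.** For `n ≥ 4`, a generic plane curve of degree `n` over `ℂ` has no
projective automorphism except the identity: inside the space of all homogeneous degree-`n`
polynomials in three variables (topologized by coefficients) there is an open dense subset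
consisting of polynomials which define smooth curves whose stabilizer in `PGL₃(ℂ)` is
trivial. -/
theorem generic_curve_trivial_automorphisms (n : ℕ) (hn : 4 ≤ n) :
    ∃ W : Set ↥(homogeneousSubmodule (Fin 3) ℂ n), IsOpen W ∧ Dense W ∧
      ∀ Φ ∈ W, SmoothCurve (Φ : MvPolynomial (Fin 3) ℂ) ∧
        ∀ g : PGL3, ProjStab (Φ : MvPolynomial (Fin 3) ℂ) g → g = 1 := by
  exact main_aux n hn
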